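/- arXiv:1505.04602 — 9 statements merged into one kernel-verified Lean document; each statement's English description precedes it below -/
import Mathlib

section
/- Let n ≥ 3 and let e₁, e₂, e₃ be three distinct unordered pairs of distinct vertices in Fin n. Then the three edges e₁, e₂, e₃ form a 3-cycle (i.e., there exist three distinct vertices x, y, z in Fin n such that {e₁, e₂, e₃} = {{x,y}, {y,z}, {x,z}}) if and only if χ(e₁) + χ(e₂) + χ(e₃) = 0 in (Fin (n-1) → ZMod 2). -/
/-- The coding vector of an unordered pair of vertices of `Fin n`:
for `e = {i,j}` with `i < j`, coordinate `k` is `1` iff `i ≤ k < j`. -/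
def chi (n : ℕ) : Sym2 (Fin n) → (Fin (n - 1) → ZMod 2) :=
  Sym2.lift ⟨fun i j k => if min i.val j.val ≤ k.val ∧ k.val < max i.val j.val then 1 else 0,
    fun i j => by funext k; dsimp only; rw [min_comm, max_comm]⟩

/-- `Cseg N` is the set of nonzero vectors of `Fin N → ZMod 2` whose support is an
interval of consecutive indices (the consecutive 1's property). -/
def Cseg (N : ℕ) : Set (Fin N → ZMod 2) :=
  {v | v ≠ 0 ∧ ∃ a b : ℕ, ∀ k : Fin N, v k = 1 ↔ a ≤ k.val ∧ k.val < b}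

/-- A finite set of vectors is reduced if it is nonempty and every nonempty proper
subset has nonzero sum. -/
def IsReducedSet {N : ℕ} (S : Finset (Fin N → ZMod 2)) : Prop :=
  S.Nonempty ∧ ∀ A : Finset (Fin N → ZMod 2), A ⊂ S → A.Nonempty → ∑ v ∈ A, v ≠ 0

/-- Threshold vector of a vertex. -/
def thr (n : ℕ) (i : Fin n) : Fin (n - 1) → ZMod 2 := fun k => if k.val < i.val then 1 else 0

theorem chi_thr (n : ℕ) (i j : Fin n) : chi n s(i, j) = thr n i + thr n j := by
  funext k
  have h2 : (1 : ZMod 2) + 1 = 0 := by decide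
  simp only [chi, thr, Sym2.lift_mk, Pi.add_apply]
  by_cases h : k.val < i.val <;> by_cases h' : k.val < j.val <;> simp [h, h', h2]

theorem thr_self (n : ℕ) (i : Fin n) : thr n i + thr n i = 0 := by
  funext k
  exact CharTwo.add_self_eq_zero _

/-- An endpoint multiset with zero total has each endpoint repeated. -/
theorem thr_rep (n : ℕ) (hn : 3 ≤ n) (a b c d p q : Fin n)
    (h : thr n a + thr n b + (thr n c + thr n d) + (thr n p + thr n q) = 0) :
    a = b ∨ a = c ∨ a = d ∨ a = p ∨ a = q := by
  by_contra! hne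
  obtain ⟨hb, hc, hd, hp, hq⟩ := hne
  have key : ∀ k : ℕ, k < n - 1 → ((if k < a.val then 1 else 0) + (if k < b.val then 1 else 0)
      + ((if k < c.val then 1 else 0) + (if k < d.val then 1 else 0))
      + ((if k < p.val then 1 else 0) + (if k < q.val then 1 else 0))) % 2 = 0 := by
    intro k hk
    have := congrFun h ⟨k, hk⟩
    simp only [thr, Pi.add_apply, Pi.zero_apply] at this
    apply Nat.mod_eq_zero_of_dvd
    rw [← ZMod.natCast_eq_zero_iff]
    push_cast
    exact this
  have hstep : ∀ x : Fin n, a ≠ x → a.val ≠ 0 →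
      (if a.val - 1 < x.val then 1 else 0) = (if a.val < x.val then 1 else 0) := by
    intro x hx h0
    have : a.val ≠ x.val := fun h => hx (Fin.ext h)
    split_ifs <;> omega
  have htop : ∀ x : Fin n, ¬ (a.val < n - 1) → (if a.val < x.val then 1 else 0) = 0 := by
    intro x hx
    have := x.isLt
    split_ifs <;> omega
  have hzero : ∀ x : Fin n, a ≠ x → a.val = 0 → (if a.val < x.val then 1 else 0) = 1 := by
    intro x hx h0
    have : a.val ≠ x.val := fun h => hx (Fin.ext h)
    split_ifs <;> omega
  by_cases h0 : a.val = 0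
  · have k0 := key a.val (by omega)
    rw [hzero b hb h0, hzero c hc h0, hzero d hd h0, hzero p hp h0, hzero q hq h0] at k0
    simp at k0
  · have k1 := key (a.val - 1) (by omega)
    rw [hstep b hb h0, hstep c hc h0, hstep d hd h0, hstep p hp h0, hstep q hq h0,
      if_pos (by omega)] at k1
    by_cases ht : a.val < n - 1
    · have k2 := key a.val ht
      rw [if_neg (lt_irrefl _)] at k2
      omega
    · rw [htop b ht, htop c ht, htop d ht, htop p ht, htop q ht] at k1
      simp at k1

theorem stmt0 (n : ℕ) (hn : 3 ≤ n) (e₁ e₂ e₃ : Sym2 (Fin n))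
    (h₁ : ¬ e₁.IsDiag) (h₂ : ¬ e₂.IsDiag) (h₃ : ¬ e₃.IsDiag)
    (h₁₂ : e₁ ≠ e₂) (h₁₃ : e₁ ≠ e₃) (h₂₃ : e₂ ≠ e₃) :
    (∃ x y z : Fin n, x ≠ y ∧ y ≠ z ∧ x ≠ z ∧
        ({e₁, e₂, e₃} : Set (Sym2 (Fin n))) = {s(x, y), s(y, z), s(x, z)}) ↔
      chi n e₁ + chi n e₂ + chi n e₃ = 0 := by
  constructor
  · rintro ⟨x, y, z, hxy, hyz, hxz, hs⟩
    classical
    have hf : ({e₁, e₂, e₃} : Finset (Sym2 (Fin n))) = {s(x, y), s(y, z), s(x, z)} := by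
      apply Finset.coe_injective
      simpa using hs
    have hsum := congrArg (fun S : Finset (Sym2 (Fin n)) => ∑ e ∈ S, chi n e) hf
    rw [Finset.sum_insert (by simp [h₁₂, h₁₃]), Finset.sum_insert (by simp [h₂₃]),
      Finset.sum_singleton, Finset.sum_insert (by simp; grind),
      Finset.sum_insert (by simp; grind), Finset.sum_singleton] at hsum
    rw [add_assoc, hsum, chi_thr, chi_thr, chi_thr]
    calc _ = (thr n x + thr n x) + (thr n y + thr n y) + (thr n z + thr n z) := by abel
      _ = 0 := by simp [thr_self]
  · induction e₁ using Sym2.ind with | _ a b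
    induction e₂ using Sym2.ind with | _ c d
    induction e₃ using Sym2.ind with | _ p q
    intro h
    rw [chi_thr, chi_thr, chi_thr] at h
    have ha := thr_rep n hn a b c d p q h
    have hb := thr_rep n hn b a c d p q (by rw [← h]; abel)
    have hc := thr_rep n hn c d a b p q (by rw [← h]; abel)
    have hd := thr_rep n hn d c a b p q (by rw [← h]; abel)
    have hp := thr_rep n hn p q a b c d (by rw [← h]; abel)
    have hq := thr_rep n hn q p a b c d (by rw [← h]; abel)
    simp only [Sym2.mk_isDiag_iff] at h₁ h₂ h₃
    clear h
    have hz : ∃ z, a ≠ z ∧ b ≠ z ∧ ((s(c, d) = s(b, z) ∧ s(p, q) = s(a, z)) ∨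
        (s(c, d) = s(a, z) ∧ s(p, q) = s(b, z))) := by
      simp only [Sym2.eq_iff, ne_eq] at h₁₂ h₁₃ h₂₃ ⊢
      by_cases hc' : c = a ∨ c = b
      · refine ⟨d, ?_⟩
        grind
      · refine ⟨c, ?_⟩
        grind
    obtain ⟨z, haz, hbz, ⟨u, v⟩ | ⟨u, v⟩⟩ := hz
    · exact ⟨a, b, z, h₁, hbz, haz, by rw [u, v]⟩
    · exact ⟨a, b, z, h₁, hbz, haz, by rw [u, v, Set.pair_comm]⟩
end

section
/- Let 3 ≤ k ≤ n and let S be a set of k distinct unordered pairs of distinct vertices in Fin n. Then the edges in S form a k-cycle (i.e., there is a cycle walk in the complete graph on Fin n of length k whose edge set is exactly S) if and only if the set {χ(e) : e ∈ S} is reduced and ∑_{e ∈ S} χ(e) = 0. -/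
theorem chi_mk (n : ℕ) (i j : Fin n) (k : Fin (n - 1)) :
    chi n s(i, j) k =
      if min i.val j.val ≤ k.val ∧ k.val < max i.val j.val then 1 else 0 := rfl

/-- The coding vector extended to all natural coordinates. -/
def chiE (n : ℕ) (m : ℕ) : Sym2 (Fin n) → ZMod 2 :=
  Sym2.lift ⟨fun i j => if min i.val j.val ≤ m ∧ m < max i.val j.val then 1 else 0,
    fun i j => by dsimp only; rw [min_comm, max_comm]⟩

theorem chiE_mk (n : ℕ) (m : ℕ) (i j : Fin n) :
    chiE n m s(i, j) = if min i.val j.val ≤ m ∧ m < max i.val j.val then 1 else 0 := rfl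

theorem sum_chiE {n : ℕ} {A : Finset (Sym2 (Fin n))} (hs : ∑ e ∈ A, chi n e = 0) (m : ℕ) :
    ∑ e ∈ A, chiE n m e = 0 := by
  by_cases hm : m < n - 1
  · have := congrFun hs ⟨m, hm⟩
    rw [Finset.sum_apply] at this
    refine Eq.trans (Finset.sum_congr rfl ?_) this
    intro e _
    induction e with | _ i j => rfl
  · apply Finset.sum_eq_zero
    intro e _
    induction e with | _ i j =>
    rw [chiE_mk, if_neg]
    have := i.2
    have := j.2
    omega

theorem parity {n : ℕ} {A : Finset (Sym2 (Fin n))} (hA : ∀ e ∈ A, ¬ e.IsDiag)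
    (hs : ∑ e ∈ A, chi n e = 0) (v : Fin n) :
    ∑ e ∈ A, (if v ∈ e then 1 else 0 : ZMod 2) = 0 := by
  rcases Nat.eq_zero_or_pos v.val with h0 | h0
  · refine Eq.trans ?_ (sum_chiE hs 0)
    apply Finset.sum_congr rfl
    intro e he
    have hd := hA e he
    induction e with | _ i j =>
    rw [Sym2.mk_isDiag_iff] at hd
    simp only [chiE_mk, Sym2.mem_iff, Fin.ext_iff] at *
    split_ifs <;> first | omega | rfl
  · have h2 : ∑ e ∈ A, (chiE n (v.val - 1) e + chiE n v.val e) = 0 := by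
      rw [Finset.sum_add_distrib, sum_chiE hs, sum_chiE hs, add_zero]
    refine Eq.trans ?_ h2
    apply Finset.sum_congr rfl
    intro e he
    have hd := hA e he
    induction e with | _ i j =>
    rw [Sym2.mk_isDiag_iff] at hd
    simp only [chiE_mk, Sym2.mem_iff, Fin.ext_iff] at *
    have h11 : (1 : ZMod 2) + 1 = 0 := by decide
    split_ifs <;> first | omega | simp [h11]

theorem exists_other {n : ℕ} {A : Finset (Sym2 (Fin n))} (hA : ∀ e ∈ A, ¬ e.IsDiag)
    (hs : ∑ e ∈ A, chi n e = 0) {v : Fin n} {e : Sym2 (Fin n)} (he : e ∈ A) (hv : v ∈ e) :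
    ∃ e' ∈ A, e' ≠ e ∧ v ∈ e' := by
  by_contra! hcon
  have h := parity hA hs v
  rw [Finset.sum_eq_single_of_mem e he (fun b hb hne => if_neg (hcon b hb hne)), if_pos hv] at h
  exact one_ne_zero h

theorem chi_inj {n : ℕ} {e e' : Sym2 (Fin n)} (he : ¬ e.IsDiag) (he' : ¬ e'.IsDiag)
    (h : chi n e = chi n e') : e = e' := by
  by_contra hne
  have hA : ∀ x ∈ ({e, e'} : Finset (Sym2 (Fin n))), ¬ x.IsDiag := by
    intro x hx
    simp only [Finset.mem_insert, Finset.mem_singleton] at hx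
    rcases hx with rfl | rfl <;> assumption
  have hs : ∑ x ∈ ({e, e'} : Finset (Sym2 (Fin n))), chi n x = 0 := by
    rw [Finset.sum_pair hne, h]
    funext k
    exact CharTwo.add_self_eq_zero _
  have key : ∀ v ∈ e, v ∈ e' := by
    intro v hv
    obtain ⟨x, hx, hxe, hvx⟩ := exists_other hA hs (by simp : e ∈ _) hv
    simp only [Finset.mem_insert, Finset.mem_singleton] at hx
    rcases hx with rfl | rfl
    · exact absurd rfl hxe
    · exact hvx
  induction e with | _ a b =>
  rw [Sym2.mk_isDiag_iff] at he
  exact hne ((Sym2.mem_and_mem_iff he).1 ⟨key a (by simp), key b (by simp)⟩).symm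

theorem walk_sum {n : ℕ} {G : SimpleGraph (Fin n)} {u v : Fin n} (w : G.Walk u v) :
    (w.edges.map (chi n)).sum = chi n s(u, v) := by
  induction w with
  | nil =>
    funext k
    rw [chi_mk, if_neg (by omega)]
    rfl
  | @cons a b c h p ih =>
    rw [SimpleGraph.Walk.edges_cons, List.map_cons, List.sum_cons, ih]
    funext k
    rw [Pi.add_apply, chi_mk, chi_mk, chi_mk]
    have h11 : (1 : ZMod 2) + 1 = 0 := by decide
    split_ifs <;> first | omega | simp [h11]

theorem cycle_sum {n : ℕ} {G : SimpleGraph (Fin n)} {u : Fin n} (w : G.Walk u u)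
    (hw : w.IsTrail) : ∑ e ∈ w.edges.toFinset, chi n e = 0 := by
  rw [List.sum_toFinset _ hw.edges_nodup, walk_sum]
  funext k
  rw [chi_mk, if_neg (by omega)]
  rfl

theorem path_indep {n : ℕ} {G : SimpleGraph (Fin n)} {u v : Fin n} (w : G.Walk u v)
    (hw : w.IsPath) (A : Finset (Sym2 (Fin n))) (hA : ∀ e ∈ A, ¬ e.IsDiag)
    (hs : ∑ e ∈ A, chi n e = 0) (hsub : ∀ e ∈ A, e ∈ w.edges) : A = ∅ := by
  induction w with
  | nil =>
    apply Finset.eq_empty_of_forall_notMem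
    intro e he
    simpa using hsub e he
  | @cons a b c h p ih =>
    rw [SimpleGraph.Walk.cons_isPath_iff] at hw
    have hmem : ∀ e ∈ A, e = s(a, b) ∨ e ∈ p.edges := by
      intro e he
      simpa using hsub e he
    have hna : ∀ e ∈ p.edges, a ∉ e := fun e he hae =>
      hw.2 (p.mem_support_of_mem_edges he hae)
    apply ih hw.1
    intro e he
    rcases hmem e he with rfl | h1
    · obtain ⟨e', he', hne, hv⟩ := exists_other hA hs he (Sym2.mem_mk_left a b)
      rcases hmem e' he' with h2 | h2
      · exact absurd h2 hne
      · exact absurd hv (hna _ h2)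
    · exact h1

theorem exists_cycle {n : ℕ} {A : Finset (Sym2 (Fin n))} (hA : ∀ e ∈ A, ¬ e.IsDiag)
    (hs : ∑ e ∈ A, chi n e = 0) (hne : A.Nonempty) :
    ∃ (v : Fin n) (w : (⊤ : SimpleGraph (Fin n)).Walk v v),
      w.IsCycle ∧ ∀ e ∈ w.edges, e ∈ A := by
  set G := SimpleGraph.fromEdgeSet (A : Set (Sym2 (Fin n))) with hG
  have hadj : ∀ {x y : Fin n}, s(x, y) ∈ A → G.Adj x y := by
    intro x y hxy
    rw [hG, SimpleGraph.fromEdgeSet_adj]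
    refine ⟨hxy, ?_⟩
    have := hA _ hxy
    rwa [Sym2.mk_isDiag_iff] at this
  have hcyc : ¬ G.IsAcyclic := by
    intro hac
    obtain ⟨e, he⟩ := hne
    induction e with | _ x y =>
    have : Nonempty (Fin n) := ⟨x⟩
    obtain ⟨u, v, p, hp, hmax⟩ := SimpleGraph.Walk.exists_isPath_forall_isPath_length_le_length G
    have hxy := hadj he
    have hlen : 1 ≤ p.length := by
      have := hmax x y (SimpleGraph.Walk.cons hxy SimpleGraph.Walk.nil) (by
        simp [hxy.ne])
      simpa using this
    cases p with
    | nil => simp at hlen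
    | @cons _ b _ h q =>
      have hub : s(u, b) ∈ A := by
        rw [hG, SimpleGraph.fromEdgeSet_adj] at h
        exact h.1
      obtain ⟨e', he', hne', hu⟩ := exists_other hA hs hub (Sym2.mem_mk_left u b)
      obtain ⟨z, rfl⟩ := hu
      have huz := hadj he'
      have hz : z ∈ (SimpleGraph.Walk.cons h q).support := by
        by_contra hz
        have := hmax _ _ (SimpleGraph.Walk.cons huz.symm (SimpleGraph.Walk.cons h q))
          (hp.cons hz)
        simp at this
      have := hac.eq_snd_of_adj_start hp huz hz
      simp at this
      exact hne' (by rw [this])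
  unfold SimpleGraph.IsAcyclic at hcyc
  push Not at hcyc
  obtain ⟨v, c, hc⟩ := hcyc
  refine ⟨v, c.mapLe le_top, hc.mapLe le_top, ?_⟩
  intro e he
  rw [SimpleGraph.Walk.edges_mapLe_eq_edges] at he
  have := c.edges_subset_edgeSet he
  rw [hG, SimpleGraph.edgeSet_fromEdgeSet] at this
  exact this.1

theorem stmt1 (n k : ℕ) (hk : 3 ≤ k) (hkn : k ≤ n)
    (S : Finset (Sym2 (Fin n))) (hdiag : ∀ e ∈ S, ¬ e.IsDiag) (hcard : S.card = k) :
    (∃ (v : Fin n) (w : (⊤ : SimpleGraph (Fin n)).Walk v v),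
        w.IsCycle ∧ w.length = k ∧ w.edges.toFinset = S) ↔
      (IsReducedSet (S.image (chi n)) ∧ ∑ e ∈ S, chi n e = 0) := by
  have hinj : ∀ B : Finset (Sym2 (Fin n)), B ⊆ S → Set.InjOn (chi n) B :=
    fun B hB x hx y hy h => chi_inj (hdiag x (hB hx)) (hdiag y (hB hy)) h
  constructor
  · rintro ⟨v, w, hw, hlen, rfl⟩
    have hsum := cycle_sum w hw.isTrail
    refine ⟨⟨?_, ?_⟩, hsum⟩
    · rw [Finset.image_nonempty, ← Finset.card_pos]
      omega
    · intro A' hA' hne hzero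
      obtain ⟨A, hAS, rfl⟩ := Finset.subset_image_iff.1 hA'.1
      rw [Finset.sum_image (hinj A hAS)] at hzero
      rw [Finset.image_nonempty] at hne
      have hAd : ∀ e ∈ A, ¬ e.IsDiag := fun e he => hdiag e (hAS he)
      have hneA : A ≠ ∅ := Finset.nonempty_iff_ne_empty.1 hne
      have hcompl : ∑ e ∈ w.edges.toFinset \ A, chi n e = 0 := by
        have h := Finset.sum_sdiff (f := chi n) hAS
        rwa [hzero, hsum, add_zero] at h
      cases w with
      | nil => exact hw.not_nil SimpleGraph.Walk.Nil.nil
      | @cons _ b _ h p =>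
        have hp : p.IsPath := ((SimpleGraph.Walk.cons_isCycle_iff p h).1 hw).1
        by_cases h0 : s(v, b) ∈ A
        · have hE := path_indep p hp _
            (fun e he => hdiag e (Finset.mem_sdiff.1 he).1) hcompl (by
              intro e he
              rw [Finset.mem_sdiff, List.mem_toFinset, SimpleGraph.Walk.edges_cons,
                List.mem_cons] at he
              rcases he with ⟨rfl | he, hn⟩
              · exact absurd h0 hn
              · exact he)
          exact hA'.2 (Finset.image_subset_image (Finset.sdiff_eq_empty_iff_subset.1 hE))
        · apply hneA
          refine path_indep p hp A hAd hzero ?_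
          intro e he
          have h1 := hAS he
          rw [List.mem_toFinset, SimpleGraph.Walk.edges_cons, List.mem_cons] at h1
          rcases h1 with rfl | h1
          · exact absurd he h0
          · exact h1
  · rintro ⟨⟨hne, hred⟩, hsum⟩
    rw [Finset.image_nonempty] at hne
    obtain ⟨v, w, hw, hwS⟩ := exists_cycle hdiag hsum hne
    have hsub : w.edges.toFinset ⊆ S := fun e he => hwS e (List.mem_toFinset.1 he)
    have heq : w.edges.toFinset = S := by
      by_contra hneq
      have hss : w.edges.toFinset ⊂ S := hsub.ssubset_of_ne hneq
      refine hred (w.edges.toFinset.image (chi n)) ?_ ?_ ?_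
      · refine (Finset.image_subset_image hsub).ssubset_of_ne fun h => ?_
        have h1 := Finset.card_image_of_injOn (hinj _ hsub)
        have h2 := Finset.card_image_of_injOn (hinj S subset_rfl)
        have h3 := Finset.card_lt_card hss
        rw [h] at h1
        omega
      · rw [Finset.image_nonempty, ← Finset.card_pos,
          List.toFinset_card_of_nodup hw.isTrail.edges_nodup, SimpleGraph.Walk.length_edges]
        have := hw.three_le_length
        omega
      · rw [Finset.sum_image (hinj _ hsub)]
        exact cycle_sum w hw.isTrail
    refine ⟨v, w, hw, ?_, heq⟩
    rw [← SimpleGraph.Walk.length_edges, ← List.toFinset_card_of_nodup hw.isTrail.edges_nodup, heq,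
      hcard]
end

section
/- Let n ≥ 2 and let G be a simple graph on Fin n. Then G is acyclic (contains no cycle) if and only if the family of vectors (χ(e))_{e ∈ E(G)}, indexed by the edge set of G, is linearly independent over ZMod 2 in (Fin (n-1) → ZMod 2). -/
/-- Indicator vector of the coordinates below `i`. -/
def initialVec (n : ℕ) (i : Fin n) : Fin (n - 1) → ZMod 2 :=
  fun k => if k.val < i.val then 1 else 0

theorem initialVec_add_self (n : ℕ) (i : Fin n) : initialVec n i + initialVec n i = 0 := by
  funext k
  exact CharTwo.add_self_eq_zero _

theorem chi_mk_s3 (n : ℕ) (i j : Fin n) : chi n s(i, j) = initialVec n i + initialVec n j := by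
  funext k
  have h2 : (1 : ZMod 2) + 1 = 0 := by decide
  simp only [chi, Sym2.lift_mk, initialVec, Pi.add_apply]
  split_ifs <;> first | omega | simp [h2]

/-- The linear functional attached to a vertex labelling. -/
def cutFunctional (n : ℕ) (f : ℕ → ZMod 2) : (Fin (n - 1) → ZMod 2) →ₗ[ZMod 2] ZMod 2 :=
  ∑ k : Fin (n - 1), (f (k.val + 1) - f k.val) • LinearMap.proj k

theorem cutFunctional_initial (n : ℕ) (f : ℕ → ZMod 2) (i : Fin n) :
    cutFunctional n f (initialVec n i) = f i.val - f 0 := by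
  rw [← Finset.sum_range_sub]
  simp only [cutFunctional, LinearMap.sum_apply, LinearMap.smul_apply, LinearMap.proj_apply,
    initialVec, smul_eq_mul, mul_ite, mul_one, mul_zero]
  rw [← Finset.sum_range (n := n - 1)
    (fun k => if k < i.val then f (k + 1) - f k else 0), ← Finset.sum_filter]
  congr 1
  ext k
  have := i.isLt
  simp only [Finset.mem_filter, Finset.mem_range]
  omega

theorem cutFunctional_chi (n : ℕ) (f : ℕ → ZMod 2) (i j : Fin n) :
    cutFunctional n f (chi n s(i, j)) = f i.val + f j.val := by
  rw [chi_mk_s3, map_add, cutFunctional_initial, cutFunctional_initial, CharTwo.sub_eq_add,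
    CharTwo.sub_eq_add, add_add_add_comm, CharTwo.add_self_eq_zero, add_zero]

theorem stmt3 (n : ℕ) (hn : 2 ≤ n) (G : SimpleGraph (Fin n)) :
    G.IsAcyclic ↔
      LinearIndependent (ZMod 2) (fun e : G.edgeSet => chi n e.val) := by
  rw [linearIndependent_iff_notMem_span, SimpleGraph.isAcyclic_iff_forall_isBridge]
  constructor
  · rintro h ⟨e, he⟩ hmem
    have hb := h he
    induction e using Sym2.ind with
    | _ u v =>
    rw [SimpleGraph.isBridge_iff] at hb
    classical
    let f : ℕ → ZMod 2 := fun m =>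
      if hm : m < n then (if (G.deleteEdges {s(u, v)}).Reachable u ⟨m, hm⟩ then 1 else 0) else 0
    have hf : ∀ w : Fin n,
        f w.val = if (G.deleteEdges {s(u, v)}).Reachable u w then 1 else 0 := by
      intro w
      simp [f, w.isLt]
    have hle : Submodule.span (ZMod 2)
        ((fun e : G.edgeSet => chi n e.val) '' (Set.univ \ {⟨s(u, v), he⟩})) ≤
        LinearMap.ker (cutFunctional n f) := by
      rw [Submodule.span_le]
      rintro _ ⟨⟨e, he'⟩, hne, rfl⟩
      induction e using Sym2.ind with
      | _ i j =>
      have hne' : s(i, j) ≠ s(u, v) := by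
        intro hh
        apply hne.2
        simp [hh]
      have hadj : (G.deleteEdges {s(u, v)}).Adj i j := by
        rw [SimpleGraph.deleteEdges_adj]
        exact ⟨he', hne'⟩
      have hiff : (G.deleteEdges {s(u, v)}).Reachable u i ↔
          (G.deleteEdges {s(u, v)}).Reachable u j :=
        ⟨fun h => h.trans hadj.reachable, fun h => h.trans hadj.symm.reachable⟩
      simp only [SetLike.mem_coe, LinearMap.mem_ker]
      rw [cutFunctional_chi, hf, hf]
      simp only [hiff]
      exact CharTwo.add_self_eq_zero _
    have h0 := hle hmem
    simp only [LinearMap.mem_ker] at h0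
    rw [cutFunctional_chi, hf, hf, if_pos (SimpleGraph.Reachable.refl u), if_neg hb] at h0
    simp at h0
  · intro h e he
    induction e using Sym2.ind with
    | _ u v =>
    rw [SimpleGraph.isBridge_iff]
    rintro ⟨p⟩
    refine h ⟨s(u, v), he⟩ ?_
    simp only [chi_mk_s3]
    have key : ∀ {a b : Fin n}, (G.deleteEdges {s(u, v)}).Walk a b →
        initialVec n a + initialVec n b ∈ Submodule.span (ZMod 2)
        ((fun e : G.edgeSet => chi n e.val) '' (Set.univ \ {⟨s(u, v), he⟩})) := by
      intro a b q
      induction q with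
      | nil =>
        rw [initialVec_add_self]
        exact Submodule.zero_mem _
      | @cons a b c hadj q ih =>
        have hab := hadj
        rw [SimpleGraph.deleteEdges_adj] at hab
        have h1 : initialVec n a + initialVec n b ∈ Submodule.span (ZMod 2)
            ((fun e : G.edgeSet => chi n e.val) '' (Set.univ \ {⟨s(u, v), he⟩})) := by
          apply Submodule.subset_span
          refine ⟨⟨s(a, b), hab.1⟩, ⟨Set.mem_univ _, ?_⟩, chi_mk_s3 n a b⟩
          intro hh
          exact hab.2 (congrArg Subtype.val hh)
        have h2 := Submodule.add_mem _ h1 ih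
        have h3 : initialVec n a + initialVec n b + (initialVec n b + initialVec n c)
            = initialVec n a + initialVec n c := by
          rw [add_assoc, ← add_assoc (initialVec n b), initialVec_add_self, zero_add]
        rwa [h3] at h2
    exact key p
end

section
/- Let n ≥ 2 and let G be a simple graph on Fin n with at most one nontrivial connected component (i.e., any two vertices of positive degree are connected by a walk in G). Then G is Eulerian (i.e., there exists a closed walk in G that traverses every edge of G exactly once) if and only if ∑_{e ∈ E(G)} χ(e) = 0 in (Fin (n-1) → ZMod 2). -/
theorem chi_walk_sum {n : ℕ} {G : SimpleGraph (Fin n)} {u v : Fin n} (w : G.Walk u v)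
    (k : Fin (n - 1)) :
    (w.edges.map (fun e => chi n e k)).sum =
      (if u.val ≤ k.val then 1 else 0) + (if v.val ≤ k.val then 1 else 0) := by
  induction w with
  | nil => simp only [SimpleGraph.Walk.edges_nil, List.map_nil, List.sum_nil]; split_ifs <;> decide
  | @cons a b c h p ih =>
    simp only [SimpleGraph.Walk.edges_cons, List.map_cons, List.sum_cons, ih]
    simp only [chi, Sym2.lift_mk]
    split_ifs <;> first | omega | decide

/-- a coding coordinate for every natural number -/
def chiN (n : ℕ) (e : Sym2 (Fin n)) (k : ℕ) : ZMod 2 :=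
  Sym2.lift ⟨fun i j : Fin n => if min i.val j.val ≤ k ∧ k < max i.val j.val then (1 : ZMod 2) else 0,
    fun i j => by dsimp only; rw [min_comm, max_comm]⟩ e

theorem chiN_sum_zero {n : ℕ} (S : Finset (Sym2 (Fin n))) (h : ∑ e ∈ S, chi n e = 0) (k : ℕ) :
    ∑ e ∈ S, chiN n e k = 0 := by
  by_cases hk : k < n - 1
  · have := congrFun h ⟨k, hk⟩
    rw [Finset.sum_apply] at this
    refine Eq.trans ?_ this
    refine Finset.sum_congr rfl fun e _ => ?_
    induction e with | _ i j => rfl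
  · refine Finset.sum_eq_zero fun e _ => ?_
    induction e with | _ i j =>
    simp only [chiN, Sym2.lift_mk]
    rw [if_neg]
    have := i.isLt
    have := j.isLt
    omega

theorem ind_eq_chiN {n : ℕ} (x : Fin n) (e : Sym2 (Fin n)) (he : ¬ e.IsDiag) :
    (if x ∈ e then (1 : ZMod 2) else 0) =
      chiN n e x.val + (if x.val = 0 then 0 else chiN n e (x.val - 1)) := by
  induction e with | _ i j =>
  simp only [chiN, Sym2.lift_mk, Sym2.mem_iff, Fin.ext_iff]
  have hne : i.val ≠ j.val := fun h => he (by simpa [Sym2.mk_isDiag_iff] using Fin.ext h)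
  split_ifs <;> first | omega | decide

theorem even_degree_of_sum {n : ℕ} (G : SimpleGraph (Fin n)) [DecidableRel G.Adj]
    (h : ∑ e ∈ G.edgeFinset, chi n e = 0) (x : Fin n) : Even (G.degree x) := by
  rw [← G.card_incidenceFinset_eq_degree, G.incidenceFinset_eq_filter, ← ZMod.natCast_eq_zero_iff_even,
    Finset.card_filter]
  push_cast
  rw [Finset.sum_congr rfl fun e he => ind_eq_chiN x e
    (G.not_isDiag_of_mem_edgeSet (SimpleGraph.mem_edgeFinset.1 he)), Finset.sum_add_distrib,
    chiN_sum_zero _ h, zero_add]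
  by_cases hx : x.val = 0
  · simp [hx]
  · simp only [hx, if_false]
    exact chiN_sum_zero _ h _

open SimpleGraph in
theorem trail_extend {V : Type*} [Fintype V] [DecidableEq V] (G : SimpleGraph V) [DecidableRel G.Adj]
    (hcomp : ∀ u v : V, (∃ x, G.Adj u x) → (∃ y, G.Adj v y) → G.Reachable u v)
    (hev : ∀ x, Even (G.degree x))
    (hno : ¬ ∃ (v : V) (w : G.Walk v v), w.IsEulerian)
    (u v : V) (w : G.Walk u v) (hw : w.IsTrail) :
    ∃ (u' v' : V) (w' : G.Walk u' v'), w'.IsTrail ∧ w.length < w'.length := by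
  by_cases huv : u = v
  · subst huv
    by_contra hcon
    push Not at hcon
    have key : ∀ x ∈ w.support, ∀ y, G.Adj x y → s(x, y) ∈ w.edges := by
      intro x hx y hxy
      by_contra hne
      have hr : (w.rotate x hx).IsTrail := hw.rotate hx
      have hlen : (w.rotate x hx).length = w.length := w.length_rotate x hx
      have ht : (Walk.cons hxy.symm (w.rotate x hx)).IsTrail := by
        rw [Walk.isTrail_cons]
        refine ⟨hr, fun hm => hne ?_⟩
        rw [Sym2.eq_swap]
        exact (w.rotate_edges x hx).perm.mem_iff.1 hm
      have := hcon _ _ _ ht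
      simp [hlen] at this
    have hreach : ∀ x y, G.Walk x y → x ∈ w.support → y ∈ w.support := by
      intro x y p
      induction p with
      | nil => exact id
      | cons h p ih =>
        intro hx
        exact ih (w.snd_mem_support_of_mem_edges (key _ hx _ h))
    apply hno
    refine ⟨u, w, Walk.isEulerian_iff _ |>.2 ⟨hw, fun e he => ?_⟩⟩
    induction e with | _ a b =>
    rw [mem_edgeSet] at he
    have hu : ∃ x, G.Adj u x := by
      cases w with
      | nil =>
        have := hcon a b (Walk.cons he Walk.nil) (by simp)
        simp at this
      | cons h p => exact ⟨_, h⟩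
    obtain ⟨p⟩ := hcomp u a hu ⟨b, he⟩
    exact key a (hreach _ _ p w.start_mem_support) b he
  · have hodd : ¬ Even (w.edges.countP fun e => v ∈ e) := by
      rw [hw.even_countP_edges_iff]
      intro h
      exact (h huv).2 rfl
    have : ∃ y, G.Adj v y ∧ s(v, y) ∉ w.edges := by
      by_contra hcon
      push Not at hcon
      apply hodd
      have hd := hev v
      rw [← G.card_incidenceFinset_eq_degree] at hd
      convert hd using 1
      rw [List.countP_eq_length_filter, ← List.toFinset_card_of_nodup (hw.edges_nodup.filter _)]
      congr 1
      ext e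
      simp only [List.mem_toFinset, List.mem_filter, decide_eq_true_eq, mem_incidenceFinset]
      constructor
      · rintro ⟨h1, h2⟩
        exact ⟨w.edges_subset_edgeSet h1, h2⟩
      · rintro ⟨h1, h2⟩
        refine ⟨?_, h2⟩
        obtain ⟨y, rfl⟩ := Sym2.mem_iff_exists.1 h2
        exact hcon y h1
    obtain ⟨y, hy, hn⟩ := this
    refine ⟨y, u, Walk.cons hy.symm w.reverse, ?_, by simp⟩
    rw [Walk.isTrail_cons]
    refine ⟨hw.reverse, ?_⟩
    rw [Sym2.eq_swap]
    simpa using hn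

open SimpleGraph in
theorem euler_of_even {V : Type*} [Fintype V] [DecidableEq V] (G : SimpleGraph V) [DecidableRel G.Adj]
    (v₀ : V)
    (hcomp : ∀ u v : V, (∃ x, G.Adj u x) → (∃ y, G.Adj v y) → G.Reachable u v)
    (hev : ∀ x, Even (G.degree x)) :
    ∃ (v : V) (w : G.Walk v v), w.IsEulerian := by
  by_contra hno
  have : ∀ k : ℕ, ∃ (u v : V) (w : G.Walk u v), w.IsTrail ∧ k ≤ w.length := by
    intro k
    induction k with
    | zero => exact ⟨v₀, v₀, Walk.nil, by simp, by simp⟩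
    | succ k ih =>
      obtain ⟨u, v, w, hw, hk⟩ := ih
      obtain ⟨u', v', w', hw', hk'⟩ := trail_extend G hcomp hev hno u v w hw
      exact ⟨u', v', w', hw', by omega⟩
  obtain ⟨u, v, w, hw, hk⟩ := this (G.edgeFinset.card + 1)
  have := hw.length_le_card_edgeFinset
  omega

theorem stmt4 (n : ℕ) (hn : 2 ≤ n) (G : SimpleGraph (Fin n)) [DecidableRel G.Adj]
    (hcomp : ∀ u v : Fin n, (∃ x, G.Adj u x) → (∃ y, G.Adj v y) → G.Reachable u v) :
    (∃ (v : Fin n) (w : G.Walk v v), w.IsEulerian) ↔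
      ∑ e ∈ G.edgeFinset, chi n e = 0 := by
  constructor
  · rintro ⟨v, w, hw⟩
    funext k
    rw [Finset.sum_apply, Pi.zero_apply]
    have h := chi_walk_sum w k
    have hE : G.edgeFinset = w.edges.toFinset := by
      ext e
      simp [hw.mem_edges_iff]
    rw [hE, List.sum_toFinset _ hw.isTrail.edges_nodup, h]
    split_ifs <;> decide
  · intro h
    exact euler_of_even G ⟨0, by omega⟩ hcomp (even_degree_of_sum G h)
end

section
/- Let n ≥ 2 and let G be a simple graph on Fin n. Then G is a tree (connected and acyclic) if and only if the family of vectors (χ(e))_{e ∈ E(G)}, indexed by the edge set of G, is a basis of the vector space (Fin (n-1) → ZMod 2) over ZMod 2 (i.e., it is linearly independent and spans the whole space). -/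
/-- prefix indicator vector -/
def pvec (n : ℕ) (i : ℕ) : Fin (n - 1) → ZMod 2 := fun k => if k.val < i then 1 else 0

theorem chi_eq (n : ℕ) (i j : Fin n) : chi n s(i, j) = pvec n i.val + pvec n j.val := by
  funext k
  have h2 : (1 : ZMod 2) + 1 = 0 := by decide
  simp only [chi, Sym2.lift_mk, pvec, Pi.add_apply]
  split_ifs <;> first | omega | simp [h2]

theorem pvec_self (n i : ℕ) : pvec n i + pvec n i = 0 := by
  funext k
  exact CharTwo.add_self_eq_zero _

theorem pvec_succ (n : ℕ) (k : Fin (n - 1)) :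
    pvec n (k.val + 1) = pvec n k.val + Pi.single k 1 := by
  funext l
  by_cases h : l = k
  · subst h; simp [pvec]
  · have h' : l.val ≠ k.val := fun h' => h (Fin.ext h')
    simp only [pvec, Pi.add_apply, Pi.single_eq_of_ne h, add_zero]
    congr 1
    apply propext
    omega

theorem walk_mem (n : ℕ) (G : SimpleGraph (Fin n)) {u v : Fin n} (w : G.Walk u v) :
    pvec n u.val + pvec n v.val ∈
      Submodule.span (ZMod 2) (Set.range fun e : G.edgeSet => chi n e.val) := by
  induction w with
  | nil => rw [pvec_self]; exact Submodule.zero_mem _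
  | @cons a b c h w ih =>
    have h1 : chi n s(a, b) ∈
        Submodule.span (ZMod 2) (Set.range fun e : G.edgeSet => chi n e.val) :=
      Submodule.subset_span ⟨⟨s(a, b), h⟩, rfl⟩
    rw [chi_eq] at h1
    have h2 := Submodule.add_mem _ h1 ih
    have h3 : pvec n a.val + pvec n b.val + (pvec n b.val + pvec n c.val)
        = pvec n a.val + pvec n c.val := by
      rw [add_assoc, ← add_assoc (pvec n b.val), pvec_self, zero_add]
    rwa [h3] at h2

theorem span_of_connected (n : ℕ) (G : SimpleGraph (Fin n)) (hG : G.Connected) :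
    Submodule.span (ZMod 2) (Set.range fun e : G.edgeSet => chi n e.val) = ⊤ := by
  rw [eq_top_iff, ← (Pi.basisFun (ZMod 2) (Fin (n - 1))).span_eq, Submodule.span_le]
  rintro _ ⟨k, rfl⟩
  obtain ⟨w⟩ := hG.preconnected (⟨k.val, by omega⟩ : Fin n) ⟨k.val + 1, by omega⟩
  have h := walk_mem n G w
  simp only [pvec_succ] at h
  rw [← add_assoc, pvec_self, zero_add] at h
  simpa using h

theorem functional_pvec (n : ℕ) (s : ℕ → ZMod 2)
    (f : (Fin (n - 1) → ZMod 2) →ₗ[ZMod 2] ZMod 2)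
    (hf : ∀ k : Fin (n - 1), f (Pi.single k 1) = s k.val + s (k.val + 1)) (i : ℕ) (hi : i < n) :
    f (pvec n i) = s 0 + s i := by
  induction i with
  | zero =>
    have : pvec n 0 = 0 := by funext k; simp [pvec]
    rw [this, map_zero, CharTwo.add_self_eq_zero]
  | succ i ih =>
    have h := pvec_succ n ⟨i, by omega⟩
    simp only at h
    rw [h, map_add, ih (by omega), hf]
    simp only
    rw [add_assoc, ← add_assoc (s i), CharTwo.add_self_eq_zero, zero_add]

theorem connected_of_span (n : ℕ) (hn : 2 ≤ n) (G : SimpleGraph (Fin n))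
    (h : Submodule.span (ZMod 2) (Set.range fun e : G.edgeSet => chi n e.val) = ⊤) :
    G.Connected := by
  classical
  let z : Fin n := ⟨0, by omega⟩
  let s : ℕ → ZMod 2 := fun i => if hi : i < n then (if G.Reachable z ⟨i, hi⟩ then 1 else 0) else 0
  have hs : ∀ i : Fin n, s i.val = if G.Reachable z i then 1 else 0 := fun i => by
    simp [s, i.isLt]
  let f : (Fin (n - 1) → ZMod 2) →ₗ[ZMod 2] ZMod 2 :=
    (Pi.basisFun (ZMod 2) (Fin (n - 1))).constr (ZMod 2) (fun k => s k.val + s (k.val + 1))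
  have hf : ∀ k : Fin (n - 1), f (Pi.single k 1) = s k.val + s (k.val + 1) := fun k => by
    rw [← Pi.basisFun_apply, Module.Basis.constr_basis]
  have hp := functional_pvec n s f hf
  have hf0 : f = 0 := by
    apply LinearMap.ext_on_range h
    rintro ⟨e, he⟩
    induction e using Sym2.ind with
    | _ a b =>
      have hab : G.Adj a b := he
      have hiff : G.Reachable z a ↔ G.Reachable z b :=
        ⟨fun h => h.trans hab.reachable, fun h => h.trans hab.symm.reachable⟩
      simp only [chi_eq, map_add, LinearMap.zero_apply]
      rw [hp _ a.isLt, hp _ b.isLt, hs a, hs b]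
      simp only [hiff]
      exact CharTwo.add_self_eq_zero _
  have hr : ∀ i : Fin n, G.Reachable z i := by
    intro i
    by_contra hi
    have := hp i.val i.isLt
    have hz := hs z
    rw [hf0, hs i, if_neg hi, show (0 : ℕ) = z.val from rfl, hz, if_pos (SimpleGraph.Reachable.refl z)] at this
    simp at this
  haveI : Nonempty (Fin n) := ⟨z⟩
  exact ⟨fun a b => (hr a).symm.trans (hr b)⟩

theorem stmt6 (n : ℕ) (hn : 2 ≤ n) (G : SimpleGraph (Fin n)) :
    (G.Connected ∧ G.IsAcyclic) ↔
      (LinearIndependent (ZMod 2) (fun e : G.edgeSet => chi n e.val) ∧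
        Submodule.span (ZMod 2) (Set.range fun e : G.edgeSet => chi n e.val) = ⊤) := by
  classical
  constructor
  · rintro ⟨hc, ha⟩
    have hsp := span_of_connected n G hc
    refine ⟨?_, hsp⟩
    have hcard := (SimpleGraph.isTree_iff_connected_and_card.mp ⟨hc, ha⟩).2
    apply linearIndependent_of_top_le_span_of_card_eq_finrank hsp.ge
    rw [Nat.card_eq_fintype_card, Nat.card_eq_fintype_card, Fintype.card_fin] at hcard
    rw [Module.finrank_fin_fun]
    omega
  · rintro ⟨hli, hsp⟩
    have hc := connected_of_span n hn G hsp
    have hb := Module.finrank_eq_card_basis (Module.Basis.mk hli hsp.ge)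
    rw [Module.finrank_fin_fun] at hb
    have ht : G.IsTree := by
      refine SimpleGraph.isTree_iff_connected_and_card.mpr ⟨hc, ?_⟩
      rw [Nat.card_eq_fintype_card, Nat.card_eq_fintype_card, Fintype.card_fin]
      omega
    exact ⟨hc, ht.isAcyclic⟩
end

section
/- Let S₁ and S₂ be finite sets of nonzero vectors in (Fin n → ZMod 2) with |S₁| = |S₂|. Then there exists a bijection ψ : S₁ → S₂ such that for every subset X of S₁, X is linearly independent over ZMod 2 if and only if ψ(X) is linearly independent over ZMod 2, if and only if there exists a bijective linear operator (linear equivalence) T on (Fin n → ZMod 2) whose image of S₁ is exactly S₂ (i.e., T '' S₁ = S₂). -/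
open Submodule in
/-- An injective-on-basis prescription extends to a linear automorphism. -/
theorem exists_equiv_of_indep {n : ℕ} (B : Set (Fin n → ZMod 2))
    (ψ : (Fin n → ZMod 2) → (Fin n → ZMod 2))
    (hB : LinearIndepOn (ZMod 2) id B) (hψ : LinearIndepOn (ZMod 2) ψ B) :
    ∃ T : (Fin n → ZMod 2) ≃ₗ[ZMod 2] (Fin n → ZMod 2), ∀ b ∈ B, T b = ψ b := by
  have hb : LinearIndependent (ZMod 2) ((↑) : B → (Fin n → ZMod 2)) := hB
  have hc : LinearIndependent (ZMod 2) (fun b : B => ψ b) := hψ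
  let f := (Module.Basis.span hb).equiv (Module.Basis.span hc) (Equiv.refl _)
  obtain ⟨g, hg⟩ := Submodule.exists_linearEquiv_restrict_eq f
  refine ⟨g, fun b hbB => ?_⟩
  have h := hg (Module.Basis.span hb ⟨b, hbB⟩)
  rw [Module.Basis.equiv_apply, Module.Basis.span_apply, Module.Basis.span_apply] at h
  exact h.symm

/-- Over `ZMod 2`, a vector in the span of an independent set is determined by the spans of
the one-element-deleted subsets containing it. -/
theorem eq_of_span_diff {n : ℕ} (B : Set (Fin n → ZMod 2)) (hB : LinearIndepOn (ZMod 2) id B)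
    (v w : Fin n → ZMod 2) (hv : v ∈ Submodule.span (ZMod 2) B)
    (hw : w ∈ Submodule.span (ZMod 2) B)
    (h : ∀ b ∈ B, v ∈ Submodule.span (ZMod 2) (B \ {b}) ↔
      w ∈ Submodule.span (ZMod 2) (B \ {b})) : v = w := by
  let bs := Module.Basis.extend hB
  have hsub : B ⊆ hB.extend (Set.subset_univ B) := hB.subset_extend _
  have key : ∀ C ⊆ B, ∀ u, u ∈ Submodule.span (ZMod 2) C ↔ ∀ i, bs.repr u i ≠ 0 → i.1 ∈ C := by
    intro C hC u
    have : C = bs '' {x | x.1 ∈ C} := by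
      ext x
      simp only [bs, Module.Basis.coe_extend, Set.mem_image, Set.mem_ofPred_eq]
      exact ⟨fun hx => ⟨⟨x, hsub (hC hx)⟩, hx, rfl⟩, fun ⟨y, hy, e⟩ => e ▸ hy⟩
    conv_lhs => rw [this]
    rw [Module.Basis.mem_span_image]
    simp [Set.subset_def]
  apply bs.repr.injective
  ext i
  have two : ∀ a b : ZMod 2, (a = 0 ↔ b = 0) → a = b := by decide
  apply two
  by_cases hi : i.1 ∈ B
  · have aux : ∀ u ∈ Submodule.span (ZMod 2) B,
        (u ∈ Submodule.span (ZMod 2) (B \ {i.1}) ↔ bs.repr u i = 0) := by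
      intro u hu
      rw [key _ Set.sdiff_subset]
      rw [key _ subset_rfl] at hu
      constructor
      · intro h1
        by_contra h2
        exact (h1 i h2).2 rfl
      · intro h1 j hj
        refine ⟨hu j hj, fun e => hj ?_⟩
        rw [Subtype.ext (Set.mem_singleton_iff.1 e)]
        exact h1
    rw [← aux v hv, ← aux w hw, h _ hi]
  · have aux : ∀ u ∈ Submodule.span (ZMod 2) B, bs.repr u i = 0 := by
      intro u hu
      rw [key _ subset_rfl] at hu
      by_contra h2
      exact hi (hu i h2)
    simp [aux v hv, aux w hw]

theorem stmt9 (n : ℕ) (S₁ S₂ : Finset (Fin n → ZMod 2))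
    (h₁ : (0 : Fin n → ZMod 2) ∉ S₁) (h₂ : (0 : Fin n → ZMod 2) ∉ S₂)
    (hcard : S₁.card = S₂.card) :
    (∃ ψ : (Fin n → ZMod 2) → (Fin n → ZMod 2), Set.BijOn ψ ↑S₁ ↑S₂ ∧
        ∀ X : Set (Fin n → ZMod 2), X ⊆ ↑S₁ →
          (LinearIndependent (ZMod 2) ((↑) : X → (Fin n → ZMod 2)) ↔
            LinearIndependent (ZMod 2) ((↑) : (ψ '' X) → (Fin n → ZMod 2)))) ↔
      (∃ T : (Fin n → ZMod 2) ≃ₗ[ZMod 2] (Fin n → ZMod 2), ⇑T '' ↑S₁ = ↑S₂) := by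
  classical
  constructor
  · rintro ⟨ψ, hψ, hind⟩
    have hind' : ∀ X : Set (Fin n → ZMod 2), X ⊆ ↑S₁ →
        (LinearIndepOn (ZMod 2) id X ↔ LinearIndepOn (ZMod 2) id (ψ '' X)) := hind
    obtain ⟨B, hBS, hBspan, hB0⟩ :=
      exists_linearIndependent (ZMod 2) (S₁ : Set (Fin n → ZMod 2))
    have hB : LinearIndepOn (ZMod 2) id B := hB0
    have hψB : LinearIndepOn (ZMod 2) ψ B := by
      rw [linearIndepOn_iff_image (hψ.injOn.mono hBS)]
      exact (hind' B hBS).1 hB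
    obtain ⟨T, hT⟩ := exists_equiv_of_indep B ψ hB hψB
    -- membership in spans transfers
    have trans : ∀ v ∈ S₁, ∀ C ⊆ B, v ∉ C → (v ∈ Submodule.span (ZMod 2) C ↔
        T.symm (ψ v) ∈ Submodule.span (ZMod 2) C) := by
      intro v hv C hC hvC
      have hCS : C ⊆ ↑S₁ := hC.trans hBS
      have h1 := hind' (insert v C) (Set.insert_subset hv hCS)
      have hvC' : ψ v ∉ ψ '' C := by
        rintro ⟨c, hc, e⟩
        exact hvC (hψ.injOn (hCS hc) hv e ▸ hc)
      have hCi := hB.mono hC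
      rw [Set.image_insert_eq, linearIndepOn_id_insert hvC, linearIndepOn_id_insert hvC',
        ← hind' C hCS] at h1
      have h2 : v ∈ Submodule.span (ZMod 2) C ↔ ψ v ∈ Submodule.span (ZMod 2) (ψ '' C) := by
        tauto
      rw [h2]
      have h3 : ψ '' C = T '' C := Set.image_congr fun c hc => (hT c (hC hc)).symm
      have h4 : Submodule.span (ZMod 2) (T '' C) =
          (Submodule.span (ZMod 2) C).map (T : (Fin n → ZMod 2) →ₗ[ZMod 2] (Fin n → ZMod 2)) :=
        (Submodule.map_span (T : (Fin n → ZMod 2) →ₗ[ZMod 2] (Fin n → ZMod 2)) C).symm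
      rw [h3, h4, Submodule.mem_map]
      constructor
      · rintro ⟨y, hy, e⟩
        rw [← e]
        simpa using hy
      · intro h
        exact ⟨_, h, by simp⟩
    have hTψ : ∀ v ∈ S₁, T v = ψ v := by
      intro v hv
      by_cases hvB : v ∈ B
      · exact hT v hvB
      have hvs : v ∈ Submodule.span (ZMod 2) B := hBspan ▸ Submodule.subset_span hv
      have e := eq_of_span_diff B hB v (T.symm (ψ v)) hvs
        ((trans v hv B subset_rfl hvB).1 hvs)
        (fun b _ => trans v hv _ Set.sdiff_subset fun h => hvB h.1)
      conv_lhs => rw [e]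
      simp
    refine ⟨T, ?_⟩
    rw [← hψ.image_eq]
    exact Set.image_congr hTψ
  · rintro ⟨T, hT⟩
    refine ⟨T, ⟨?_, T.injective.injOn, hT.ge⟩, fun X _ => ?_⟩
    · rw [← hT]
      exact Set.mapsTo_image _ _
    · change LinearIndepOn (ZMod 2) id X ↔ LinearIndepOn (ZMod 2) id (T '' X)
      rw [← linearIndepOn_iff_image T.injective.injOn]
      exact (LinearMap.linearIndependent_iff
        (T : (Fin n → ZMod 2) →ₗ[ZMod 2] (Fin n → ZMod 2)) (v := ((↑) : X → (Fin n → ZMod 2)))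
        T.ker).symm
end

section
/- Let A and A₁ be n × m matrices over ZMod 2 each of whose columns are nonzero and pairwise distinct. Then there exists a bijection σ of the column index set Fin m such that for every subset X of Fin m, the columns of A indexed by X are linearly independent over ZMod 2 if and only if the columns of A₁ indexed by σ(X) are linearly independent over ZMod 2, if and only if there exist an invertible n × n matrix P over ZMod 2 and an m × m permutation matrix Q over ZMod 2 such that P * A * Q = A₁. -/
/-- Over `ZMod 2`, independence of a finite subfamily means no nonempty subset sums to zero. -/
lemma aux_indep {ι V : Type*} [AddCommGroup V] [Module (ZMod 2) V] [DecidableEq ι]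
    (v : ι → V) (S : Finset ι) :
    LinearIndepOn (ZMod 2) v (S : Set ι) ↔ ∀ T ⊆ S, ∑ i ∈ T, v i = 0 → T = ∅ := by
  rw [linearIndepOn_finset_iff]
  constructor
  · intro h T hT h0
    have h1 := h (fun i => if i ∈ T then 1 else 0) (by
      simp only [ite_smul, one_smul, zero_smul]
      rw [Finset.sum_ite_mem, Finset.inter_eq_right.mpr hT, h0])
    rw [Finset.eq_empty_iff_forall_notMem]
    intro i hi
    have := h1 i (hT hi)
    simp [hi] at this
  · intro h f hf i hi
    have key : ∀ x : ZMod 2, x ≠ 0 → x = 1 := by decide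
    have h1 := h (S.filter fun i => f i ≠ 0) (Finset.filter_subset _ _) (by
      rw [← hf, Finset.sum_filter]
      refine Finset.sum_congr rfl fun j _ => ?_
      split_ifs with hj
      · rw [key _ hj, one_smul]
      · push Not at hj
        rw [hj, zero_smul])
    by_contra hne
    have : i ∈ S.filter fun i => f i ≠ 0 := by simp [hi, hne]
    rw [h1] at this
    simp at this

lemma aux_sums {ι V : Type*} [AddCommGroup V] [Module (ZMod 2) V] [DecidableEq ι]
    (v w : ι → V)
    (h : ∀ S : Finset ι, LinearIndepOn (ZMod 2) v (S : Set ι) ↔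
      LinearIndepOn (ZMod 2) w (S : Set ι)) (k : ℕ) :
    ∀ S : Finset ι, S.card ≤ k → (∑ i ∈ S, v i = 0 ↔ ∑ i ∈ S, w i = 0) := by
  induction k with
  | zero =>
    intro S hS
    have : S = ∅ := by simpa using hS
    simp [this]
  | succ k ih =>
    have main : ∀ (v w : ι → V), (∀ S : Finset ι, LinearIndepOn (ZMod 2) v (S : Set ι) ↔
        LinearIndepOn (ZMod 2) w (S : Set ι)) →
        (∀ S : Finset ι, S.card ≤ k → (∑ i ∈ S, v i = 0 ↔ ∑ i ∈ S, w i = 0)) →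
        ∀ S : Finset ι, S.card ≤ k + 1 → ∑ i ∈ S, v i = 0 → ∑ i ∈ S, w i = 0 := by
      intro v w h ih S hS h0
      by_cases hE : S = ∅
      · simp [hE]
      have h1 : ¬ LinearIndepOn (ZMod 2) w (S : Set ι) := by
        rw [← h, aux_indep]
        exact fun h2 => hE (h2 S subset_rfl h0)
      rw [aux_indep] at h1
      push Not at h1
      obtain ⟨T, hTS, hT0, hTne⟩ := h1
      by_cases hT : T = S
      · rwa [← hT]
      have hlt : T.card < S.card := Finset.card_lt_card (hTS.ssubset_of_ne hT)
      have hpos : 0 < T.card := Finset.card_pos.mpr (by simpa [Finset.nonempty_iff_ne_empty] using hTne)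
      have hcard := Finset.card_sdiff_add_card_eq_card hTS
      have hvT := (ih T (by omega)).mpr hT0
      have e1 := Finset.sum_sdiff (f := v) hTS
      have e2 := Finset.sum_sdiff (f := w) hTS
      rw [hvT, h0, add_zero] at e1
      rw [← e2, hT0, (ih (S \ T) (by omega)).mp e1, add_zero]
    intro S hS
    exact ⟨main v w h ih S hS, main w v (fun S => (h S).symm) (fun S hS => (ih S hS).symm) S hS⟩

lemma aux_equiv {K U V : Type*} [Field K] [AddCommGroup U] [Module K U]
    [AddCommGroup V] [Module K V] [FiniteDimensional K V]
    (f g : U →ₗ[K] V) (h : LinearMap.ker f = LinearMap.ker g) :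
    ∃ e : V ≃ₗ[K] V, ∀ u, e (f u) = g u := by
  let r : LinearMap.range f ≃ₗ[K] LinearMap.range g :=
    f.quotKerEquivRange.symm.trans ((Submodule.quotEquivOfEq _ _ h).trans g.quotKerEquivRange)
  have hr : ∀ u, r ⟨f u, u, rfl⟩ = ⟨g u, u, rfl⟩ := by
    intro u
    have : (⟨f u, u, rfl⟩ : LinearMap.range f) = f.quotKerEquivRange (Submodule.Quotient.mk u) := rfl
    simp only [r, LinearEquiv.trans_apply]
    rw [this, LinearEquiv.symm_apply_apply, Submodule.quotEquivOfEq_mk]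
    rfl
  obtain ⟨p, hp⟩ := Submodule.exists_isCompl (LinearMap.range f)
  obtain ⟨q, hq⟩ := Submodule.exists_isCompl (LinearMap.range g)
  have d1 := Submodule.finrank_add_eq_of_isCompl hp
  have d2 := Submodule.finrank_add_eq_of_isCompl hq
  have d3 := r.finrank_eq
  let s : p ≃ₗ[K] q := LinearEquiv.ofFinrankEq _ _ (by omega)
  refine ⟨(Submodule.prodEquivOfIsCompl _ _ hp).symm.trans
    ((r.prodCongr s).trans (Submodule.prodEquivOfIsCompl _ _ hq)), fun u => ?_⟩
  have : (Submodule.prodEquivOfIsCompl _ _ hp).symm (f u) = (⟨f u, u, rfl⟩, 0) := by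
    rw [LinearEquiv.symm_apply_eq]
    simp
  simp [this, hr]

theorem stmt10 (n m : ℕ) (A A₁ : Matrix (Fin n) (Fin m) (ZMod 2))
    (hA0 : ∀ j, A.transpose j ≠ 0) (hA₁0 : ∀ j, A₁.transpose j ≠ 0)
    (hAinj : Function.Injective A.transpose) (hA₁inj : Function.Injective A₁.transpose) :
    (∃ σ : Equiv.Perm (Fin m), ∀ X : Set (Fin m),
        (LinearIndependent (ZMod 2) (fun x : X => A.transpose x.val) ↔
          LinearIndependent (ZMod 2) (fun y : (⇑σ '' X) => A₁.transpose y.val))) ↔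
      (∃ (P : Matrix (Fin n) (Fin n) (ZMod 2)) (τ : Equiv.Perm (Fin m)),
        IsUnit P ∧
          P * A * (Matrix.of fun i j : Fin m => if τ i = j then (1 : ZMod 2) else 0) = A₁) := by
  have hQ : ∀ (B : Matrix (Fin n) (Fin m) (ZMod 2)) (τ : Equiv.Perm (Fin m)) i j,
      (B * (Matrix.of fun i j : Fin m => if τ i = j then (1 : ZMod 2) else 0)) i (τ j) = B i j := by
    intro B τ i j
    simp [Matrix.mul_apply]
  have hre : ∀ (σ : Equiv.Perm (Fin m)) (X : Set (Fin m)),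
      LinearIndependent (ZMod 2) (fun y : (⇑σ '' X) => A₁.transpose y.val) ↔
        LinearIndepOn (ZMod 2) (fun j => A₁.transpose (σ j)) X := by
    intro σ X
    exact (linearIndependent_equiv' (σ.image X) rfl).symm
  constructor
  · rintro ⟨σ, h⟩
    have h' : ∀ S : Finset (Fin m), LinearIndepOn (ZMod 2) A.transpose (S : Set (Fin m)) ↔
        LinearIndepOn (ZMod 2) (fun j => A₁.transpose (σ j)) (S : Set (Fin m)) :=
      fun S => (h S).trans (hre σ S)
    have hs := fun S => aux_sums _ _ h' m S (by simpa using S.card_le_univ)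
    have hsum : ∀ (v : Fin m → Fin n → ZMod 2) (c : Fin m → ZMod 2),
        Fintype.linearCombination (ZMod 2) v c = ∑ i ∈ Finset.univ.filter fun i => c i ≠ 0, v i := by
      intro v c
      have key : ∀ x : ZMod 2, x ≠ 0 → x = 1 := by decide
      rw [Fintype.linearCombination_apply, Finset.sum_filter]
      refine Finset.sum_congr rfl fun j _ => ?_
      split_ifs with hj
      · rw [key _ hj, one_smul]
      · push Not at hj
        rw [hj, zero_smul]
    obtain ⟨e, he⟩ := aux_equiv (Fintype.linearCombination (ZMod 2) (fun j => A.transpose j))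
      (Fintype.linearCombination (ZMod 2) (fun j => A₁.transpose (σ j))) (by
        ext c
        rw [LinearMap.mem_ker, LinearMap.mem_ker, hsum, hsum]
        exact hs _)
    refine ⟨LinearMap.toMatrix' e.toLinearMap, σ, ?_, ?_⟩
    · rw [LinearMap.isUnit_toMatrix'_iff]
      exact (Module.End.isUnit_iff _).mpr e.bijective
    · ext i j
      obtain ⟨j, rfl⟩ := σ.surjective j
      rw [hQ]
      have h1 := he (Pi.single j 1)
      simp only [Fintype.linearCombination_apply_single, one_smul] at h1
      have h2 := LinearMap.toMatrix'_mulVec e.toLinearMap (A.transpose j)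
      have h3 := congrFun (h2.trans h1) i
      exact h3
  · rintro ⟨P, τ, hP, h⟩
    refine ⟨τ, fun X => ?_⟩
    rw [hre]
    have hcol : (fun j => A₁.transpose (τ j)) = P.mulVecLin ∘ A.transpose := by
      funext j i
      rw [← h]
      exact hQ _ _ _ _
    rw [hcol]
    have hk : LinearMap.ker P.mulVecLin = ⊥ :=
      LinearMap.ker_eq_bot.mpr (Matrix.mulVec_injective_of_isUnit hP)
    exact (LinearMap.linearIndependent_iff P.mulVecLin hk).symm
end

section
/- Let n ≥ 2 and let a, b, c be three pairwise distinct unordered pairs of distinct vertices in Fin n. If χ(a) + χ(b) ∈ C(n-1), χ(b) + χ(c) ∈ C(n-1), and χ(a) + χ(c) ∈ C(n-1), then either χ(a) + χ(b) + χ(c) = 0 or a ∩ b = a ∩ c = b ∩ c. -/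
lemma chi_apply (n : ℕ) (i j : Fin n) (t : Fin (n-1)) :
    chi n s(i, j) t = if min i.val j.val ≤ t.val ∧ t.val < max i.val j.val then 1 else 0 := rfl

lemma chi_apply_lt (n : ℕ) (i j : Fin n) (h : i.val < j.val) (t : Fin (n-1)) :
    chi n s(i, j) t = if i.val ≤ t.val ∧ t.val < j.val then 1 else 0 := by
  rw [chi_apply, min_eq_left h.le, max_eq_right h.le]

lemma share_aux (n : ℕ) (i j k l : Fin n) (hij : i.val < j.val) (hkl : k.val < l.val)
    (h : chi n s(i, j) + chi n s(k, l) ∈ Cseg (n - 1)) :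
    i = k ∨ i = l ∨ j = k ∨ j = l := by
  obtain ⟨-, a, b, h⟩ := h
  have key : ∀ t : ℕ, t < n - 1 →
      ((¬ ((i.val ≤ t ∧ t < j.val) ↔ (k.val ≤ t ∧ t < l.val))) ↔ (a ≤ t ∧ t < b)) := by
    intro t ht
    rw [← h ⟨t, ht⟩, Pi.add_apply, chi_apply_lt n i j hij, chi_apply_lt n k l hkl]
    by_cases h1 : (i.val ≤ t ∧ t < j.val) <;> by_cases h2 : (k.val ≤ t ∧ t < l.val) <;>
      simp [h1, h2] <;> decide
  have ki := key i.val
  have kj := key j.val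
  have kk := key k.val
  have kl := key l.val
  clear key h
  simp only [Fin.ext_iff]
  have := i.2
  have := j.2
  have := k.2
  have := l.2
  by_contra hc
  push Not at hc
  obtain ⟨h1, h2, h3, h4⟩ := hc
  rcases lt_or_gt_of_ne h1 with h1 | h1 <;> rcases lt_or_gt_of_ne h2 with h2 | h2 <;>
  rcases lt_or_gt_of_ne h3 with h3 | h3 <;> rcases lt_or_gt_of_ne h4 with h4 | h4 <;> omega

lemma share (n : ℕ) (i j k l : Fin n) (hij : i ≠ j) (hkl : k ≠ l)
    (h : chi n s(i, j) + chi n s(k, l) ∈ Cseg (n - 1)) :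
    i = k ∨ i = l ∨ j = k ∨ j = l := by
  rcases lt_or_gt_of_ne hij with h1 | h1 <;> rcases lt_or_gt_of_ne hkl with h2 | h2
  · exact share_aux n i j k l h1 h2 h
  · rw [Sym2.eq_swap (a := k)] at h
    have := share_aux n i j l k h1 h2 h
    tauto
  · rw [Sym2.eq_swap (a := i)] at h
    have := share_aux n j i k l h1 h2 h
    tauto
  · rw [Sym2.eq_swap (a := i), Sym2.eq_swap (a := k)] at h
    have := share_aux n j i l k h1 h2 h
    tauto

/-- Triangle: the sum vanishes. -/
lemma tri (n : ℕ) (x y z : Fin n) :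
    chi n s(x, y) + chi n s(y, z) + chi n s(x, z) = 0 := by
  funext t
  simp only [Pi.add_apply, chi_apply, Pi.zero_apply]
  split_ifs <;> first | decide | (exfalso; omega)

lemma tri_of (n : ℕ) (a b c : Sym2 (Fin n)) (x y z : Fin n) (ha : a = s(x, y)) (hb : b = s(y, z))
    (hc : c = s(x, z)) : chi n a + chi n b + chi n c = 0 := by
  subst ha hb hc
  exact tri n x y z

theorem stmt17 (n : ℕ) (hn : 2 ≤ n) (i j k l r s : Fin n)
    (hij : i ≠ j) (hkl : k ≠ l) (hrs : r ≠ s)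
    (hab : s(i, j) ≠ s(k, l)) (hac : s(i, j) ≠ s(r, s)) (hbc : s(k, l) ≠ s(r, s))
    (h1 : chi n s(i, j) + chi n s(k, l) ∈ Cseg (n - 1))
    (h2 : chi n s(k, l) + chi n s(r, s) ∈ Cseg (n - 1))
    (h3 : chi n s(i, j) + chi n s(r, s) ∈ Cseg (n - 1)) :
    chi n s(i, j) + chi n s(k, l) + chi n s(r, s) = 0 ∨
      (({i, j} ∩ {k, l} : Finset (Fin n)) = {i, j} ∩ {r, s} ∧
        ({i, j} ∩ {r, s} : Finset (Fin n)) = {k, l} ∩ {r, s}) := by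
  have e1 := share n i j k l hij hkl h1
  have e2 := share n k l r s hkl hrs h2
  have e3 := share n i j r s hij hrs h3
  clear h1 h2 h3
  by_cases ht : ∃ x y z, s(i, j) = s(x, y) ∧ s(k, l) = s(y, z) ∧ s(r, s) = s(x, z)
  · obtain ⟨x, y, z, ha, hb, hc⟩ := ht
    exact Or.inl (tri_of n _ _ _ x y z ha hb hc)
  · right
    have t1 : ∀ x y z, s(i, j) = s(x, y) → s(k, l) = s(y, z) → s(r, s) ≠ s(x, z) :=
      fun x y z ha hb hc => ht ⟨x, y, z, ha, hb, hc⟩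
    have q1 := t1 i j k
    have q2 := t1 i j l
    have q3 := t1 j i k
    have q4 := t1 j i l
    clear t1 ht
    simp only [Sym2.eq_iff, ne_eq] at *
    constructor <;> ext u <;> simp only [Finset.mem_inter, Finset.mem_insert, Finset.mem_singleton] <;>
    rcases e1 with e1 | e1 | e1 | e1 <;> rcases e2 with e2 | e2 | e2 | e2 <;>
    rcases e3 with e3 | e3 | e3 | e3 <;> subst_vars <;> grind
end

section
/- Let n ≥ 2 and let G and H be simple graphs on Fin n. Then G and H are isomorphic as graphs if and only if there exists a bijective linear operator (linear equivalence) T on (Fin (n-1) → ZMod 2) over ZMod 2 such that the image of C(n-1) under T is exactly C(n-1) and the image of β(G) under T is exactly β(H). -/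
/-- Prefix vectors. -/
def pv (n : ℕ) (a : Fin n) : Fin (n - 1) → ZMod 2 := fun k => if k.val < a.val then 1 else 0

theorem chi_eq_s19 (n : ℕ) (a b : Fin n) : chi n s(a, b) = pv n a + pv n b := by
  funext k
  have h2 : (1 : ZMod 2) + 1 = 0 := by decide
  simp only [chi, Sym2.lift_mk, pv, Pi.add_apply]
  rcases lt_or_ge k.val a.val with h | h <;> rcases lt_or_ge k.val b.val with h' | h'
  · rw [if_neg (by omega), if_pos h, if_pos h', h2]
  · rw [if_pos (by omega), if_pos h, if_neg (by omega), add_zero]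
  · rw [if_pos (by omega), if_neg (by omega), if_pos h', zero_add]
  · rw [if_neg (by omega), if_neg (by omega), if_neg (by omega), add_zero]

theorem self_add (N : ℕ) (v : Fin N → ZMod 2) : v + v = 0 := by
  funext k
  exact CharTwo.add_self_eq_zero _

theorem add_eq_zero_two (N : ℕ) (v w : Fin N → ZMod 2) (h : v + w = 0) : v = w := by
  funext k
  exact CharTwo.add_eq_zero.mp (congrFun h k)

/-- Difference map. -/
def dmap (n : ℕ) (v : Fin (n - 1) → ZMod 2) : Fin n → ZMod 2 := fun i =>
  (if h : i.val < n - 1 then v ⟨i.val, h⟩ else 0) +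
    (if h : 0 < i.val then v ⟨i.val - 1, by omega⟩ else 0)

theorem dmap_add (n : ℕ) (v w : Fin (n - 1) → ZMod 2) :
    dmap n (v + w) = dmap n v + dmap n w := by
  funext i
  simp only [dmap, Pi.add_apply]
  split_ifs <;> ring

/-- Indicator. -/
def ev (n : ℕ) (a : Fin n) : Fin n → ZMod 2 := fun i => if i = a then 1 else 0

theorem dmap_pv (n : ℕ) (hn : 2 ≤ n) (a : Fin n) :
    dmap n (pv n a) = ev n a + ev n ⟨0, by omega⟩ := by
  funext i
  have h2 : (1 : ZMod 2) + 1 = 0 := by decide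
  simp only [dmap, pv, ev, Pi.add_apply, Fin.ext_iff]
  split_ifs <;> first | omega | simp [h2]

theorem dmap_edge (n : ℕ) (hn : 2 ≤ n) (a b : Fin n) :
    dmap n (pv n a + pv n b) = ev n a + ev n b := by
  rw [dmap_add, dmap_pv n hn, dmap_pv n hn, add_add_add_comm, self_add, add_zero]

theorem edge_inj (n : ℕ) (hn : 2 ≤ n) (a b c d : Fin n) (hab : a ≠ b)
    (h : pv n a + pv n b = pv n c + pv n d) : s(a, b) = s(c, d) := by
  have h1 := congrArg (dmap n) h
  rw [dmap_edge n hn, dmap_edge n hn] at h1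
  have ha := congrFun h1 a
  have hb := congrFun h1 b
  have h2 : (1 : ZMod 2) + 1 = 0 := by decide
  have h3 : (1 : ZMod 2) ≠ 0 := by decide
  simp only [ev, Pi.add_apply] at ha hb
  rw [Sym2.eq_iff]
  grind

theorem edge_ne_zero (n : ℕ) (hn : 2 ≤ n) (a b : Fin n) (h : pv n a + pv n b = 0) : a = b := by
  by_contra hab
  have := edge_inj n hn a b a a hab (by rw [h, self_add])
  rw [Sym2.eq_iff] at this
  grind

theorem mem_Cseg (n : ℕ) (hn : 2 ≤ n) (v : Fin (n - 1) → ZMod 2) :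
    v ∈ Cseg (n - 1) ↔ ∃ a b : Fin n, a ≠ b ∧ v = pv n a + pv n b := by
  constructor
  · rintro ⟨hv, a, b, h⟩
    have hz : ∀ x : ZMod 2, x ≠ 1 → x = 0 := by decide
    obtain ⟨k, hk⟩ : ∃ k, v k ≠ 0 := by
      by_contra! hc
      exact hv (funext hc)
    have hk1 : v k = 1 := by
      by_contra hc
      exact hk (hz _ hc)
    have hk2 := (h k).1 hk1
    have := k.2
    refine ⟨⟨a, by omega⟩, ⟨min b (n - 1), by omega⟩, ?_, ?_⟩
    · rw [Ne, Fin.ext_iff]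
      dsimp only
      omega
    · rw [← chi_eq_s19]
      funext j
      simp only [chi, Sym2.lift_mk]
      have hj := j.2
      split_ifs with hc
      · exact (h j).2 (by omega)
      · exact hz _ (fun hh => hc (by have := (h j).1 hh; omega))
  · rintro ⟨a, b, hab, rfl⟩
    refine ⟨fun h => hab (edge_ne_zero n hn a b h), min a.val b.val, max a.val b.val, fun k => ?_⟩
    rw [← chi_eq_s19]
    simp only [chi, Sym2.lift_mk]
    split_ifs with hc
    · simp [hc]
    · simp only [hc]
      decide

theorem mem_beta (n : ℕ) (hn : 2 ≤ n) (G : SimpleGraph (Fin n)) (a b : Fin n) :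
    pv n a + pv n b ∈ chi n '' G.edgeSet ↔ G.Adj a b := by
  constructor
  · rintro ⟨e, he, h⟩
    induction e using Sym2.ind with
    | _ x y =>
      rw [chi_eq_s19] at h
      have hxy : x ≠ y := G.ne_of_adj he
      have := edge_inj n hn x y a b hxy h
      rw [this] at he
      exact he
  · intro h
    exact ⟨s(a, b), h, chi_eq_s19 n a b⟩

/-- Map induced by a vertex map. -/
def tmap (n : ℕ) (s : Fin n → Fin n) : (Fin (n - 1) → ZMod 2) →ₗ[ZMod 2] (Fin (n - 1) → ZMod 2) :=
  ∑ k : Fin (n - 1), (LinearMap.proj k : (Fin (n - 1) → ZMod 2) →ₗ[ZMod 2] ZMod 2).smulRight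
    (pv n (s ⟨k.val, by omega⟩) + pv n (s ⟨k.val + 1, by omega⟩))

theorem single_eq (n : ℕ) (k : Fin (n - 1)) : (Pi.single k 1 : Fin (n - 1) → ZMod 2) =
    pv n ⟨k.val, by omega⟩ + pv n ⟨k.val + 1, by omega⟩ := by
  rw [← chi_eq_s19]
  funext j
  simp only [chi, Sym2.lift_mk, Pi.single_apply, Fin.ext_iff]
  split_ifs <;> first | rfl | omega

theorem tmap_single (n : ℕ) (s : Fin n → Fin n) (k : Fin (n - 1)) :
    tmap n s (Pi.single k 1) =
      pv n (s ⟨k.val, by omega⟩) + pv n (s ⟨k.val + 1, by omega⟩) := by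
  simp only [tmap, LinearMap.sum_apply, LinearMap.smulRight_apply, LinearMap.proj_apply]
  rw [Finset.sum_eq_single k]
  · simp
  · intro b _ hb
    simp [hb]
  · simp

theorem pv_zero (n : ℕ) (h : 0 < n) : pv n ⟨0, h⟩ = 0 := by
  funext k
  simp [pv]

theorem tmap_pv (n : ℕ) (s : Fin n → Fin n) (i : ℕ) (h : i < n) :
    tmap n s (pv n ⟨i, h⟩) = pv n (s ⟨i, h⟩) + pv n (s ⟨0, by omega⟩) := by
  induction i with
  | zero => rw [pv_zero, map_zero, self_add]
  | succ i ih =>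
    have h1 := tmap_single n s ⟨i, by omega⟩
    rw [single_eq, map_add, ih (by omega)] at h1
    dsimp only at h1
    have h2 : ∀ x y z t : Fin (n - 1) → ZMod 2, x + y + z = x + t → z = t + y := by
      intro x y z t hh
      have : y + z = t := by
        rw [add_assoc] at hh
        exact add_left_cancel hh
      rw [← this, add_comm y z, add_assoc, self_add, add_zero]
    exact h2 _ _ _ _ h1

theorem tmap_edge (n : ℕ) (s : Fin n → Fin n) (a b : Fin n) :
    tmap n s (pv n a + pv n b) = pv n (s a) + pv n (s b) := by
  rw [map_add, tmap_pv n s a.val a.2, tmap_pv n s b.val b.2, add_add_add_comm, self_add, add_zero]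

theorem tmap_comp (n : ℕ) (s t : Fin n → Fin n) (h : ∀ i, s (t i) = i) :
    tmap n s ∘ₗ tmap n t = LinearMap.id := by
  apply LinearMap.pi_ext'
  intro k
  ext1
  simp only [LinearMap.comp_apply, LinearMap.coe_single, LinearMap.id_apply]
  rw [tmap_single, tmap_edge, h, h, single_eq]

/-- Equivalence induced by a permutation. -/
def tequiv (n : ℕ) (s : Equiv.Perm (Fin n)) :
    (Fin (n - 1) → ZMod 2) ≃ₗ[ZMod 2] (Fin (n - 1) → ZMod 2) :=
  LinearEquiv.ofLinearMap (tmap n s) (tmap n s.symm)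
    (tmap_comp n _ _ (fun i => s.apply_symm_apply i))
    (tmap_comp n _ _ (fun i => s.symm_apply_apply i))

theorem tequiv_edge (n : ℕ) (s : Equiv.Perm (Fin n)) (a b : Fin n) :
    tequiv n s (pv n a + pv n b) = pv n (s a) + pv n (s b) := tmap_edge n s a b

theorem meet (n : ℕ) (hn : 2 ≤ n) (a b c d x y : Fin n) (hab : a ≠ b) (hcd : c ≠ d)
    (hxy : x ≠ y)
    (h : (pv n a + pv n b) + (pv n c + pv n d) = pv n x + pv n y) :
    (a = c ∧ b ≠ d) ∨ (a = d ∧ b ≠ c) ∨ (b = c ∧ a ≠ d) ∨ (b = d ∧ a ≠ c) := by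
  have h1 := congrArg (dmap n) h
  rw [dmap_add, dmap_edge n hn, dmap_edge n hn, dmap_edge n hn] at h1
  have ha := congrFun h1 a
  have hb := congrFun h1 b
  have hc := congrFun h1 c
  have hx := congrFun h1 x
  have h2 : (1 : ZMod 2) + 1 = 0 := by decide
  have h3 : (1 : ZMod 2) ≠ 0 := by decide
  simp only [ev, Pi.add_apply] at ha hb hc hx
  grind

theorem star (n : ℕ) (hn : 2 ≤ n)
    (T : (Fin (n - 1) → ZMod 2) ≃ₗ[ZMod 2] (Fin (n - 1) → ZMod 2))
    (hT : ∀ a b : Fin n, a ≠ b → ∃ c d, c ≠ d ∧ T (pv n a + pv n b) = pv n c + pv n d) :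
    ∃ c, ∀ i : Fin n, ∃ d, T (pv n i) = pv n c + pv n d := by
  have h0 : 0 < n := by omega
  have hT0 : ∀ a : Fin n, a ≠ ⟨0, h0⟩ → ∃ c d, c ≠ d ∧ T (pv n a) = pv n c + pv n d := by
    intro a ha
    have := hT a _ ha
    rwa [pv_zero, add_zero] at this
  obtain ⟨a, b, hab, h1⟩ := hT0 ⟨1, by omega⟩ (by simp)
  by_cases hn3 : n = 2
  · refine ⟨a, fun i => ?_⟩
    have : i = ⟨0, h0⟩ ∨ i = ⟨1, by omega⟩ := by
      simp only [Fin.ext_iff]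
      omega
    rcases this with rfl | rfl
    · exact ⟨a, by rw [pv_zero, map_zero, self_add]⟩
    · exact ⟨b, h1⟩
  have hm : ∀ i j : Fin n, i ≠ j → ∀ a b c d, a ≠ b → c ≠ d → T (pv n i) = pv n a + pv n b →
      T (pv n j) = pv n c + pv n d →
      (a = c ∧ b ≠ d) ∨ (a = d ∧ b ≠ c) ∨ (b = c ∧ a ≠ d) ∨ (b = d ∧ a ≠ c) := by
    intro i j hij a b c d hab hcd hi hj
    obtain ⟨x, y, hxy, h⟩ := hT i j hij
    rw [map_add, hi, hj] at h
    exact meet n hn a b c d x y hab hcd hxy h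
  obtain ⟨c, d, hcd, h2⟩ := hT0 ⟨2, by omega⟩ (by simp)
  obtain ⟨u, v, w, huv, huw, hvw, h1', h2'⟩ : ∃ u v w, u ≠ v ∧ u ≠ w ∧ v ≠ w ∧
      T (pv n ⟨1, by omega⟩) = pv n u + pv n v ∧ T (pv n ⟨2, by omega⟩) = pv n u + pv n w := by
    rcases hm _ _ (by simp) a b c d hab hcd h1 h2 with ⟨rfl, h⟩ | ⟨rfl, h⟩ | ⟨rfl, h⟩ | ⟨rfl, h⟩
    · exact ⟨a, b, d, hab, hcd, h, h1, h2⟩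
    · exact ⟨a, b, c, hab, hcd.symm, h, h1, by rw [h2, add_comm]⟩
    · exact ⟨b, a, d, hab.symm, hcd, h, by rw [h1, add_comm], h2⟩
    · exact ⟨b, a, c, hab.symm, hcd.symm, h, by rw [h1, add_comm], by rw [h2, add_comm]⟩
  refine ⟨u, fun i => ?_⟩
  by_cases hi0 : i = ⟨0, h0⟩
  · exact ⟨u, by rw [hi0, pv_zero, map_zero, self_add]⟩
  by_cases hi1 : i = ⟨1, by omega⟩
  · exact ⟨v, by rw [hi1, h1']⟩
  by_cases hi2 : i = ⟨2, by omega⟩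
  · exact ⟨w, by rw [hi2, h2']⟩
  obtain ⟨x, y, hxy, h3⟩ := hT0 i hi0
  by_cases hux : u = x
  · exact ⟨y, by rw [h3, hux]⟩
  by_cases huy : u = y
  · exact ⟨x, by rw [h3, huy, add_comm]⟩
  exfalso
  have m1 := hm _ _ hi1 x y u v hxy huv h3 h1'
  have m2 := hm _ _ hi2 x y u w hxy huw h3 h2'
  have h4 : T (pv n i) = pv n v + pv n w := by
    rw [h3]
    have : (x = v ∧ y = w) ∨ (x = w ∧ y = v) := by grind
    rcases this with ⟨rfl, rfl⟩ | ⟨rfl, rfl⟩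
    · rfl
    · rw [add_comm]
  have h5 : T (pv n i) = T (pv n ⟨1, by omega⟩ + pv n ⟨2, by omega⟩) := by
    rw [map_add, h1', h2', h4, add_add_add_comm, self_add, zero_add]
  have h6 := T.injective h5
  have h7 := edge_inj n hn i ⟨0, h0⟩ ⟨1, by omega⟩ ⟨2, by omega⟩ hi0
    (by rw [pv_zero, add_zero, h6])
  rw [Sym2.eq_iff] at h7
  simp [Fin.ext_iff] at h7

theorem stmt19 (n : ℕ) (hn : 2 ≤ n) (G H : SimpleGraph (Fin n)) :
    Nonempty (G ≃g H) ↔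
      ∃ T : (Fin (n - 1) → ZMod 2) ≃ₗ[ZMod 2] (Fin (n - 1) → ZMod 2),
        ⇑T '' Cseg (n - 1) = Cseg (n - 1) ∧
          ⇑T '' (chi n '' G.edgeSet) = chi n '' H.edgeSet := by
  constructor
  · rintro ⟨f⟩
    refine ⟨tequiv n f.toEquiv, ?_, ?_⟩
    · ext v
      constructor
      · rintro ⟨w, hw, rfl⟩
        obtain ⟨a, b, hab, rfl⟩ := (mem_Cseg n hn w).1 hw
        rw [tequiv_edge]
        exact (mem_Cseg n hn _).2 ⟨_, _, fun h => hab (f.toEquiv.injective h), rfl⟩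
      · intro hv
        obtain ⟨a, b, hab, rfl⟩ := (mem_Cseg n hn v).1 hv
        refine ⟨pv n (f.toEquiv.symm a) + pv n (f.toEquiv.symm b), (mem_Cseg n hn _).2
          ⟨_, _, fun h => hab (f.toEquiv.symm.injective h), rfl⟩, ?_⟩
        rw [tequiv_edge, Equiv.apply_symm_apply, Equiv.apply_symm_apply]
    · ext v
      constructor
      · rintro ⟨_, ⟨e, he, rfl⟩, rfl⟩
        induction e using Sym2.ind with
        | _ x y =>
          rw [chi_eq_s19, tequiv_edge, mem_beta n hn]
          exact f.map_adj_iff.2 he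
      · rintro ⟨e, he, rfl⟩
        induction e using Sym2.ind with
        | _ x y =>
          refine ⟨pv n (f.toEquiv.symm x) + pv n (f.toEquiv.symm y),
            (mem_beta n hn _ _ _).2 (f.symm.map_adj_iff.2 he), ?_⟩
          rw [tequiv_edge, Equiv.apply_symm_apply, Equiv.apply_symm_apply, chi_eq_s19]
  · rintro ⟨T, hC, hB⟩
    obtain ⟨c, hc⟩ := star n hn T (fun a b hab => by
      rw [← mem_Cseg n hn, ← hC]
      exact ⟨_, (mem_Cseg n hn _).2 ⟨a, b, hab, rfl⟩, rfl⟩)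
    choose s hs using hc
    have hedge : ∀ i j, T (pv n i + pv n j) = pv n (s i) + pv n (s j) := by
      intro i j
      rw [map_add, hs, hs, add_add_add_comm, self_add, zero_add]
    have hinj : Function.Injective s := by
      intro i j hij
      apply edge_ne_zero n hn
      apply T.injective
      rw [hedge, hij, self_add, map_zero]
    refine ⟨⟨Equiv.ofBijective s (Finite.injective_iff_bijective.1 hinj), ?_⟩⟩
    intro a b
    change H.Adj (s a) (s b) ↔ G.Adj a b
    rw [← mem_beta n hn, ← mem_beta n hn, ← hB, ← hedge, T.injective.mem_set_image]
end
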